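/- Let ψ: ℕ → (0,∞) with ψ(n) → ∞ and ψ(n)/n → ∞. Then the set E_sup(ψ) = { x ∈ (0,1] : limsup_{n→∞} (log d_n(x))/ψ(n) = 1 } has Hausdorff dimension 1/(1 + A), where log A = liminf_{n→∞} (log ψ(n))/n. -/

import Mathlib

open Filter Topology Real Set ENNReal

/-- The first Lüroth digit: `d₁(x) = ⌊1/x⌋ + 1`. -/
noncomputable def lurothD1 (x : ℝ) : ℕ := ⌊1 / x⌋₊ + 1

/-- The Lüroth map `T(x) = d₁(x)(d₁(x)-1)(x - 1/d₁(x))`. -/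
noncomputable def lurothT (x : ℝ) : ℝ :=
  (lurothD1 x : ℝ) * ((lurothD1 x : ℝ) - 1) * (x - 1 / (lurothD1 x : ℝ))

/-- The `n`-th Lüroth digit `dₙ(x) = d₁(T^{n-1}(x))`. -/
noncomputable def lurothDigit (n : ℕ) (x : ℝ) : ℕ := lurothD1 (lurothT^[n - 1] x)

open scoped NNReal Asymptotics

/-!
The `n`-th Lüroth cylinder with digits `d₁, …, dₙ` has length `∏ 1 / (dᵢ (dᵢ - 1))`, and requiring
`dₙ₊₁ ≥ m` cuts it down to a fraction of about `1 / m`.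

*Upper bound.* If `b < A`, then `ψ` outgrows `b ^ n`, so a sequence `u n = log dₙ₊₁` with upper
growth rate `ψ` cannot be bounded by its own history: for every `K`, infinitely many `n` satisfy
`u n ≥ ∑ i < n, ((b - 1) * u i + K)`. The corresponding pieces of cylinders have summable
`s`-th powers of their diameters as soon as `s > 1 / (1 + b)` and `K` is large. When `A = 1`, the
superlinearity of `ψ` plays this role with `b = 1`.

*Lower bound.* If `B > A`, the largest minorant `c` of `ψ` with ratios at most `B` equals `ψ`
infinitely often. Letting the digits `dₙ₊₁` run freely through an interval `[N n, 2 N n)` with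
`log (N n)` close to `c n` gives points of `E_sup(ψ)`, parametrized by `[0, 1)` through the
expansion in the mixed radix `N`. The inverse of this parametrization is Hölder of every exponent
`s < 1 / (1 + B)`, because `c n` is at most `(B - 1) * ∑ i < n, c i` up to a constant.
-/

section HausdorffDimension

variable {X Y : Type*} [EMetricSpace X] [EMetricSpace Y]

/-- The **Hausdorff–Cantelli lemma**. The tails of the convergent series bound both the diameters
and the sums of the covers obtained by discarding finitely many of the sets. -/
lemma dimH_le_of_frequently_mem {ι : Type*} [Countable ι] {F : Set X} {U : ι → Set X} {s : ℝ≥0}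
    (hs : 0 < s) (hF : ∀ x ∈ F, ∃ᶠ i in cofinite, x ∈ U i)
    (hsum : ∑' i, Metric.ediam (U i) ^ (s : ℝ) ≠ ∞) : dimH F ≤ s := by
  borelize X
  have hs' : (0 : ℝ) < s := hs
  set tail : Finset ι → ℝ≥0∞ := fun S => ∑' i : {i // i ∉ S}, Metric.ediam (U i) ^ (s : ℝ)
  have htail : Tendsto tail atTop (𝓝 0) := ENNReal.tendsto_tsum_compl_atTop_zero hsum
  have hradius : Tendsto (fun S => tail S ^ (s : ℝ)⁻¹) atTop (𝓝 0) := by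
    simpa [hs'] using htail.ennrpow_const (s : ℝ)⁻¹
  have hdiam (S : Finset ι) (i : {i // i ∉ S}) : Metric.ediam (U i) ≤ tail S ^ (s : ℝ)⁻¹ := by
    rw [ENNReal.le_rpow_inv_iff hs']
    exact ENNReal.le_tsum (f := fun i : {i // i ∉ S} => Metric.ediam (U i) ^ (s : ℝ)) i
  have hcover (S : Finset ι) : F ⊆ ⋃ i : {i // i ∉ S}, U i := fun x hx => by
    obtain ⟨i, hxi, hiS⟩ := ((hF x hx).and_eventually S.eventually_cofinite_notMem).exists
    exact mem_iUnion.2 ⟨⟨i, hiS⟩, hxi⟩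
  have hmeas : MeasureTheory.Measure.hausdorffMeasure (s : ℝ) F ≤ 0 :=
    (MeasureTheory.Measure.hausdorffMeasure_le_liminf_tsum _ F _ hradius _
      (Eventually.of_forall hdiam) (Eventually.of_forall hcover)).trans htail.liminf_eq.le
  exact dimH_le_of_hausdorffMeasure_ne_top (ne_top_of_le_ne_top ENNReal.zero_ne_top hmeas)

lemma mul_dimH_le_dimH_image_of_edist_le {g : X → Y} {S : Set X} {C s : ℝ≥0} (hs : 0 < s)
    (hg : ∀ x ∈ S, ∀ y ∈ S, edist x y ≤ C * edist (g x) (g y) ^ (s : ℝ)) :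
    s * dimH S ≤ dimH (g '' S) := by
  rcases S.eq_empty_or_nonempty with rfl | ⟨x₀, -⟩
  · simp
  have : Nonempty X := ⟨x₀⟩
  have hinj : InjOn g S := fun x hx y hy hxy => by
    simpa [hxy, ENNReal.zero_rpow_of_pos (NNReal.coe_pos.2 hs)] using hg x hx y hy
  have hinv : LeftInvOn (Function.invFunOn g S) g S := hinj.leftInvOn_invFunOn
  have hholder : HolderOnWith C s (Function.invFunOn g S) (g '' S) := by
    rintro _ ⟨x, hx, rfl⟩ _ ⟨y, hy, rfl⟩
    rw [hinv hx, hinv hy]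
    exact hg x hx y hy
  have hdim := hholder.dimH_image_le hs
  rw [hinv.image_image, ENNReal.le_div_iff_mul_le (by simp [hs.ne']) (by simp)] at hdim
  rwa [mul_comm]

end HausdorffDimension

section ExtendedNonneg

lemma tsum_prod_eq_tsum_pow {α : Type*} (f : α → ℝ≥0∞) (n : ℕ) :
    ∑' w : Fin n → α, ∏ i, f (w i) = (∑' a, f a) ^ n := by
  induction n with
  | zero => simp
  | succ n ih =>
    rw [← (Fin.consEquiv fun _ : Fin (n + 1) => α).tsum_eq, ENNReal.tsum_prod']
    simp only [Fin.consEquiv_apply, Fin.prod_univ_succ, Fin.cons_zero, Fin.cons_succ,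
      ENNReal.tsum_mul_left, ENNReal.tsum_mul_right, ih, pow_succ']

lemma continuous_one_div_one_add : Continuous fun t : ℝ≥0∞ => 1 / (1 + t) := by
  simp only [one_div]
  exact (continuous_const_add 1).inv

lemma le_one_div_one_add_of_forall_mem_Ioo {a A₀ A : ℝ≥0∞} (hA : A₀ < A)
    (h : ∀ b ∈ Ioo A₀ A, a ≤ 1 / (1 + b)) : a ≤ 1 / (1 + A) := by
  have : (𝓝[<] A).NeBot := nhdsLT_neBot_of_exists_lt ⟨A₀, hA⟩
  exact ge_of_tendsto (continuous_one_div_one_add.continuousWithinAt (s := Iio A))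
    (mem_of_superset (Ioo_mem_nhdsLT hA) h)

lemma one_div_one_add_le_of_forall_mem_Ioo {a A A₁ : ℝ≥0∞} (hA : A < A₁)
    (h : ∀ b ∈ Ioo A A₁, 1 / (1 + b) ≤ a) : 1 / (1 + A) ≤ a := by
  have : (𝓝[>] A).NeBot := nhdsGT_neBot_of_exists_gt ⟨A₁, hA⟩
  exact le_of_tendsto (continuous_one_div_one_add.continuousWithinAt (s := Ioi A))
    (mem_of_superset (Ioo_mem_nhdsGT hA) h)

end ExtendedNonneg

section Growth

lemma limsup_div_eq_one_of_le_add_of_frequently_le {u v : ℕ → ℝ} {K : ℝ}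
    (hv : Tendsto v atTop atTop) (hu : ∀ n, 0 ≤ u n) (huv : ∀ n, u n ≤ v n + K)
    (hvu : ∃ᶠ n in atTop, v n ≤ u n) : limsup (fun n => u n / v n) atTop = 1 := by
  have hv0 : ∀ᶠ n in atTop, 0 < v n := hv.eventually_gt_atTop 0
  have hupper : ∀ᶠ n in atTop, u n / v n ≤ 1 + K / v n := hv0.mono fun n hn => by
    rw [div_le_iff₀ hn, add_mul, one_mul, div_mul_cancel₀ _ hn.ne']
    exact huv n
  have hlower : ∃ᶠ n in atTop, 1 ≤ u n / v n :=
    (hvu.and_eventually hv0).mono fun n hn => (one_le_div hn.2).2 hn.1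
  have hlim : Tendsto (fun n => 1 + K / v n) atTop (𝓝 1) := by
    simpa using (hv.const_div_atTop K).const_add 1
  have hbdd : IsBoundedUnder (· ≤ ·) atTop fun n => u n / v n :=
    hlim.isBoundedUnder_le.mono_le hupper
  have hcobdd : IsCoboundedUnder (· ≤ ·) atTop fun n => u n / v n :=
    (isBoundedUnder_of_eventually_ge
      (hv0.mono fun n hn => div_nonneg (hu n) hn.le)).isCoboundedUnder_le
  refine le_antisymm ?_ (le_limsup_of_frequently_le hlower hbdd)
  exact (limsup_le_limsup hupper hcobdd hlim.isBoundedUnder_le).trans hlim.limsup_eq.le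

lemma exists_forall_mul_le_sum_range_add {c : ℕ → ℝ} (hc : Tendsto c atTop atTop) (K : ℝ) :
    ∃ C, ∀ n : ℕ, K * n ≤ ∑ i ∈ Finset.range n, c i + C := by
  have hsupp : Function.HasFiniteSupport fun i => max (K - c i) 0 := by
    have hev : ∀ᶠ i in cofinite, K ≤ c i := by
      rw [Nat.cofinite_eq_atTop]
      exact hc.eventually_ge_atTop K
    refine hev.subset fun i hi hKc => hi ?_
    exact max_eq_right (sub_nonpos.2 hKc)
  refine ⟨∑' i, max (K - c i) 0, fun n => ?_⟩
  have hsum : ∑ i ∈ Finset.range n, (K - c i) ≤ ∑' i, max (K - c i) 0 :=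
    (Finset.sum_le_sum fun i _ => le_max_left _ _).trans
      ((summable_of_hasFiniteSupport hsupp).sum_le_tsum _ fun i _ => le_max_right _ _)
  rw [Finset.sum_sub_distrib, Finset.sum_const, Finset.card_range, nsmul_eq_mul] at hsum
  linarith

lemma isBigO_pow_of_eventually_succ_le_mul {u : ℕ → ℝ} {b : ℝ} (hb : 0 < b) (hu : ∀ n, 0 ≤ u n)
    (h : ∀ᶠ n in atTop, u (n + 1) ≤ b * u n) : u =O[atTop] (b ^ ·) := by
  obtain ⟨m, hm⟩ := eventually_atTop.1 h
  refine .of_bound (u m / b ^ m) (eventually_atTop.2 ⟨m, fun n hn => ?_⟩)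
  obtain ⟨k, rfl⟩ := Nat.exists_eq_add_of_le hn
  have hgeom : u (m + k) ≤ b ^ k * u m :=
    le_geom (u := fun k => u (m + k)) hb.le k fun j _ => hm (m + j) (Nat.le_add_right _ _)
  rw [Real.norm_of_nonneg (hu _), Real.norm_of_nonneg (by positivity), pow_add, ← mul_assoc,
    div_mul_cancel₀ _ (by positivity), mul_comm]
  exact hgeom

/- If the conclusion fails, the partial sums of `u`, corrected by an affine function of `n` that
absorbs `K`, eventually grow at most by the factor `b` at each step. -/
lemma frequently_sum_range_le_of_not_isBigO_pow {u : ℕ → ℝ} {b : ℝ} (hb : 1 < b)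
    (hu : ∀ n, 0 ≤ u n) (h : ¬u =O[atTop] (b ^ ·)) (K : ℝ) :
    ∃ᶠ n in atTop, ∑ i ∈ Finset.range n, ((b - 1) * u i + K) ≤ u n := by
  contrapose! h
  have hb' : 0 < b - 1 := sub_pos.2 hb
  obtain ⟨α, hα⟩ : ∃ α, α * (b - 1) = |K| := ⟨|K| / (b - 1), div_mul_cancel₀ _ hb'.ne'⟩
  obtain ⟨β, hβ⟩ : ∃ β, β * (b - 1) = α := ⟨α / (b - 1), div_mul_cancel₀ _ hb'.ne'⟩
  have hα0 : 0 ≤ α := nonneg_of_mul_nonneg_left (hα ▸ abs_nonneg K) hb'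
  have hβ0 : 0 ≤ β := nonneg_of_mul_nonneg_left (hβ ▸ hα0) hb'
  set V : ℕ → ℝ := fun n => ∑ i ∈ Finset.range n, u i + α * n + β with hV
  have hV0 (n : ℕ) : 0 ≤ V n := by
    have : 0 ≤ ∑ i ∈ Finset.range n, u i := Finset.sum_nonneg fun i _ => hu i
    positivity
  have hle : ∀ᶠ n in atTop, u n ≤ (b - 1) * V n - α := h.mono fun n hn => by
    have hK : K * n ≤ |K| * n := by gcongr; exact le_abs_self K
    simp only [Finset.sum_add_distrib, ← Finset.mul_sum, Finset.sum_const, Finset.card_range,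
      nsmul_eq_mul] at hn
    simp only [hV]
    linear_combination hn + hK - n * hα - hβ
  have hVpow : V =O[atTop] (b ^ ·) := by
    refine isBigO_pow_of_eventually_succ_le_mul (by linarith) hV0 (hle.mono fun n hn => ?_)
    simp only [hV, Finset.sum_range_succ] at hn ⊢
    push_cast
    linarith
  refine .trans (.of_bound (b - 1) (hle.mono fun n hn => ?_)) hVpow
  rw [Real.norm_of_nonneg (hu n), Real.norm_of_nonneg (hV0 n)]
  linarith

lemma frequently_mul_le_of_not_isBigO_natCast {u : ℕ → ℝ} (hu : ∀ n, 0 ≤ u n)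
    (h : ¬u =O[atTop] fun n => (n : ℝ)) (K : ℝ) : ∃ᶠ n : ℕ in atTop, K * n ≤ u n := by
  contrapose! h
  refine .of_bound K (h.mono fun n hn => ?_)
  rw [Real.norm_of_nonneg (hu n), RCLike.norm_natCast]
  exact hn.le

lemma log_div_natCast_lt_log_iff {x r : ℝ} {n : ℕ} (hx : 0 < x) (hr : 0 < r) (hn : n ≠ 0) :
    Real.log x / n < Real.log r ↔ x < r ^ n := by
  rw [div_lt_iff₀ (by positivity), mul_comm, ← Real.log_pow,
    Real.log_lt_log_iff hx (by positivity)]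

lemma log_lt_log_div_natCast_iff {x r : ℝ} {n : ℕ} (hx : 0 < x) (hr : 0 < r) (hn : n ≠ 0) :
    Real.log r < Real.log x / n ↔ r ^ n < x := by
  rw [lt_div_iff₀ (by positivity), mul_comm, ← Real.log_pow,
    Real.log_lt_log_iff (by positivity) hx]

variable {u : ℕ → ℝ} {A : ℝ≥0∞}

lemma one_le_of_log_eq_liminf (hu : ∀ᶠ n in atTop, 1 ≤ u n)
    (hA : ENNReal.log A = liminf (fun n : ℕ => ((Real.log (u n) / n : ℝ) : EReal)) atTop) :
    1 ≤ A := by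
  rw [← ENNReal.zero_le_log_iff, hA]
  refine le_liminf_of_le (by isBoundedDefault) (hu.mono fun n hn => ?_)
  exact_mod_cast div_nonneg (Real.log_nonneg hn) n.cast_nonneg

lemma not_isBigO_pow_of_log_eq_liminf (hu : ∀ᶠ n in atTop, 0 < u n)
    (hA : ENNReal.log A = liminf (fun n : ℕ => ((Real.log (u n) / n : ℝ) : EReal)) atTop)
    {B : ℝ≥0} (hB : A < B) : ¬(fun n : ℕ => (B : ℝ) ^ n) =O[atTop] u := by
  obtain ⟨r, hAr, hrB⟩ := ENNReal.lt_iff_exists_nnreal_btwn.1 hB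
  have hr0 : (0 : ℝ) < r := NNReal.coe_pos.2 (ENNReal.coe_pos.1 (bot_le.trans_lt hAr))
  have hlog : liminf (fun n : ℕ => ((Real.log (u n) / n : ℝ) : EReal)) atTop <
      (Real.log r : ℝ) := by
    rw [← hA, ← ENNReal.log_ofReal_of_pos hr0, ENNReal.ofReal_coe_nnreal]
    exact ENNReal.log_lt_log hAr
  have hfreq : ∃ᶠ n in atTop, u n < (r : ℝ) ^ n ∧ 0 < u n := by
    refine ((frequently_lt_of_liminf_lt (by isBoundedDefault) hlog).and_eventually
      (hu.and (eventually_ne_atTop 0))).mono fun n ⟨hn, hun, hn0⟩ => ⟨?_, hun⟩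
    exact (log_div_natCast_lt_log_iff hun hr0 hn0).1 (EReal.coe_lt_coe_iff.1 hn)
  intro hO
  have hr : (fun n : ℕ => (r : ℝ) ^ n) =o[atTop] u :=
    (isLittleO_pow_pow_of_lt_left hr0.le (by exact_mod_cast hrB)).trans_isBigO hO
  obtain ⟨n, ⟨hlt, hun⟩, hle⟩ := (hfreq.and_eventually (hr.bound one_pos)).exists
  rw [one_mul, Real.norm_of_nonneg (by positivity), Real.norm_of_nonneg hun.le] at hle
  exact hlt.not_ge hle

lemma isLittleO_pow_of_log_eq_liminf (hu : ∀ᶠ n in atTop, 0 < u n)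
    (hA : ENNReal.log A = liminf (fun n : ℕ => ((Real.log (u n) / n : ℝ) : EReal)) atTop)
    {b : ℝ≥0} (hb : b < A) : (fun n : ℕ => (b : ℝ) ^ n) =o[atTop] u := by
  obtain ⟨r, hbr, hrA⟩ := ENNReal.lt_iff_exists_nnreal_btwn.1 hb
  have hbr' : (b : ℝ) < r := by exact_mod_cast hbr
  have hr0 : (0 : ℝ) < r := b.coe_nonneg.trans_lt hbr'
  have hlog : (Real.log r : ℝ) <
      liminf (fun n : ℕ => ((Real.log (u n) / n : ℝ) : EReal)) atTop := by
    rw [← hA, ← ENNReal.log_ofReal_of_pos hr0, ENNReal.ofReal_coe_nnreal]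
    exact ENNReal.log_lt_log hrA
  refine (isLittleO_pow_pow_of_lt_left b.coe_nonneg hbr').trans_isBigO (.of_bound 1 ?_)
  filter_upwards [eventually_lt_of_lt_liminf hlog, hu, eventually_ne_atTop 0] with n hn hun hn0
  rw [one_mul, Real.norm_of_nonneg (by positivity), Real.norm_of_nonneg hun.le]
  exact ((log_lt_log_div_natCast_iff hun hr0 hn0).1 (EReal.coe_lt_coe_iff.1 hn)).le

end Growth

section LurothMap

variable {x y s t : ℝ} {d e n : ℕ}

lemma two_le_lurothD1 (hx : x ∈ Ioc (0 : ℝ) 1) : 2 ≤ lurothD1 x :=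
  Nat.succ_le_succ (Nat.one_le_floor_iff _ |>.2 (one_le_one_div hx.1 hx.2))

lemma lurothD1_eq_iff (hd : 2 ≤ d) (hx : 0 < x) :
    lurothD1 x = d ↔ x ∈ Ioc (d : ℝ)⁻¹ ((d : ℝ) - 1)⁻¹ := by
  obtain ⟨k, rfl⟩ : ∃ k, d = k + 1 := ⟨d - 1, by omega⟩
  have hk : (0 : ℝ) < k := Nat.cast_pos.2 (by omega)
  rw [lurothD1, Nat.add_right_cancel_iff, Nat.floor_eq_iff (by positivity), one_div, and_comm,
    mem_Ioc, Nat.cast_succ, add_sub_cancel_right, inv_lt_comm₀ hx (by positivity),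
    le_inv_comm₀ hk hx]

lemma mem_Ioc_inv_lurothD1 (hx : x ∈ Ioc (0 : ℝ) 1) :
    x ∈ Ioc (lurothD1 x : ℝ)⁻¹ ((lurothD1 x : ℝ) - 1)⁻¹ :=
  (lurothD1_eq_iff (two_le_lurothD1 hx) hx.1).1 rfl

lemma le_half_of_three_le_lurothD1 (hx : x ∈ Ioc (0 : ℝ) 1) (h : 3 ≤ lurothD1 x) :
    x ≤ 1 / 2 := by
  have h' : (3 : ℝ) ≤ lurothD1 x := by exact_mod_cast h
  rw [one_div]
  exact (mem_Ioc_inv_lurothD1 hx).2.trans (inv_anti₀ two_pos (by linarith))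

lemma natCast_mul_sub_one_nonneg (d : ℕ) : 0 ≤ (d : ℝ) * (d - 1) := by
  rcases d.eq_zero_or_pos with rfl | hd
  · simp
  · exact mul_nonneg d.cast_nonneg (sub_nonneg.2 (by exact_mod_cast hd))

/-- The inverse branch of the Lüroth map on the points with first digit `d`. -/
noncomputable def lurothBranch (d : ℕ) (t : ℝ) : ℝ := (d : ℝ)⁻¹ + t * ((d : ℝ) * (d - 1))⁻¹

lemma abs_lurothBranch_sub (d : ℕ) (s t : ℝ) :
    |lurothBranch d s - lurothBranch d t| = |s - t| * ((d : ℝ) * (d - 1))⁻¹ := by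
  rw [lurothBranch, lurothBranch, add_sub_add_left_eq_sub, ← sub_mul, abs_mul,
    abs_of_nonneg (inv_nonneg.2 (natCast_mul_sub_one_nonneg d))]

lemma inv_add_inv_mul_sub_one (hd : 2 ≤ d) :
    (d : ℝ)⁻¹ + ((d : ℝ) * (d - 1))⁻¹ = ((d : ℝ) - 1)⁻¹ := by
  have hd' : (2 : ℝ) ≤ d := by exact_mod_cast hd
  have : (d : ℝ) - 1 ≠ 0 := by linarith
  field_simp
  ring

lemma inv_natCast_mul_sub_one_pos (hd : 2 ≤ d) : 0 < ((d : ℝ) * (d - 1))⁻¹ := by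
  have hd' : (2 : ℝ) ≤ d := by exact_mod_cast hd
  exact inv_pos.2 (mul_pos (by linarith) (by linarith))

lemma lurothBranch_mem_Ioc (hd : 2 ≤ d) (ht : t ∈ Ioc (0 : ℝ) 1) :
    lurothBranch d t ∈ Ioc (d : ℝ)⁻¹ ((d : ℝ) - 1)⁻¹ := by
  have hpos := inv_natCast_mul_sub_one_pos hd
  rw [← inv_add_inv_mul_sub_one hd]
  exact ⟨lt_add_of_pos_right _ (mul_pos ht.1 hpos),
    add_le_add_right (mul_le_of_le_one_left hpos.le ht.2) _⟩

lemma lurothD1_lurothBranch (hd : 2 ≤ d) (ht : t ∈ Ioc (0 : ℝ) 1) :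
    lurothD1 (lurothBranch d t) = d := by
  have hmem := lurothBranch_mem_Ioc hd ht
  exact (lurothD1_eq_iff hd (lt_of_le_of_lt (by positivity) hmem.1)).2 hmem

lemma lurothT_lurothBranch (hd : 2 ≤ d) (ht : t ∈ Ioc (0 : ℝ) 1) :
    lurothT (lurothBranch d t) = t := by
  rw [lurothT, lurothD1_lurothBranch hd ht, lurothBranch, one_div, add_sub_cancel_left, mul_comm,
    inv_mul_cancel_right₀ (inv_pos.1 (inv_natCast_mul_sub_one_pos hd)).ne']

lemma lurothBranch_lurothT (hx : x ∈ Ioc (0 : ℝ) 1) :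
    lurothBranch (lurothD1 x) (lurothT x) = x := by
  have hpos := inv_natCast_mul_sub_one_pos (two_le_lurothD1 hx)
  rw [lurothBranch, lurothT, mul_comm (_ * _) (x - _), mul_inv_cancel_right₀ (inv_pos.1 hpos).ne',
    one_div, add_sub_cancel]

lemma lurothT_mem_Ioc (hx : x ∈ Ioc (0 : ℝ) 1) : lurothT x ∈ Ioc (0 : ℝ) 1 := by
  have hd := two_le_lurothD1 hx
  have hpos := inv_natCast_mul_sub_one_pos hd
  have hmem := mem_Ioc_inv_lurothD1 hx
  have hbranch := lurothBranch_lurothT hx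
  rw [lurothBranch] at hbranch
  rw [← inv_add_inv_mul_sub_one hd] at hmem
  exact ⟨pos_of_mul_pos_left (by linarith [hmem.1]) hpos.le,
    (mul_le_iff_le_one_left hpos).1 (by linarith [hmem.2])⟩

lemma lurothT_iterate_mem_Ioc (hx : x ∈ Ioc (0 : ℝ) 1) (n : ℕ) : lurothT^[n] x ∈ Ioc (0 : ℝ) 1 :=
  MapsTo.iterate (fun _ => lurothT_mem_Ioc) n hx

lemma two_le_lurothDigit (hx : x ∈ Ioc (0 : ℝ) 1) (n : ℕ) : 2 ≤ lurothDigit n x :=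
  two_le_lurothD1 (lurothT_iterate_mem_Ioc hx (n - 1))

lemma lurothBranch_lurothDigit (hx : x ∈ Ioc (0 : ℝ) 1) (n : ℕ) :
    lurothBranch (lurothDigit (n + 1) x) (lurothT^[n + 1] x) = lurothT^[n] x := by
  rw [Function.iterate_succ_apply']
  exact lurothBranch_lurothT (lurothT_iterate_mem_Ioc hx n)

lemma abs_sub_eq_mul_prod_of_lurothDigit_eq (hx : x ∈ Ioc (0 : ℝ) 1) (hy : y ∈ Ioc (0 : ℝ) 1)
    (h : ∀ i < n, lurothDigit (i + 1) x = lurothDigit (i + 1) y) :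
    |x - y| = |lurothT^[n] x - lurothT^[n] y| *
      ∏ i ∈ Finset.range n, ((lurothDigit (i + 1) x : ℝ) * (lurothDigit (i + 1) x - 1))⁻¹ := by
  induction n with
  | zero => simp
  | succ n ih =>
    rw [ih fun i hi => h i (by omega), Finset.prod_range_succ, ← lurothBranch_lurothDigit hx n,
      ← lurothBranch_lurothDigit hy n, ← h n n.lt_succ_self, abs_lurothBranch_sub]
    ring

lemma abs_natCast_sub_div_le_abs_lurothBranch_sub (hd : 2 ≤ d) (he : 2 ≤ e)
    (hs : s ∈ Icc (0 : ℝ) (1 / 2)) (ht : t ∈ Icc (0 : ℝ) (1 / 2)) :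
    |(d : ℝ) - e| / (2 * (d * e)) ≤ |lurothBranch d s - lurothBranch e t| := by
  wlog hde : d < e generalizing d e s t
  · obtain rfl | hed := (not_lt.1 hde).eq_or_lt
    · simp
    · rw [abs_sub_comm, abs_sub_comm (lurothBranch d s), mul_comm (d : ℝ)]
      exact this he hd ht hs hed
  have hd' : (2 : ℝ) ≤ d := by exact_mod_cast hd
  have hde' : (d : ℝ) + 1 ≤ e := by exact_mod_cast hde
  have hlower : (d : ℝ)⁻¹ ≤ lurothBranch d s := le_add_of_nonneg_right
    (mul_nonneg hs.1 (inv_natCast_mul_sub_one_pos hd).le)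
  have hupper : lurothBranch e t ≤ (e : ℝ)⁻¹ + 1 / 2 * ((d : ℝ)⁻¹ - (e : ℝ)⁻¹) := by
    have hinv : ((e : ℝ) - 1)⁻¹ ≤ (d : ℝ)⁻¹ := inv_anti₀ (by linarith) (by linarith)
    rw [lurothBranch]
    gcongr
    · exact (inv_natCast_mul_sub_one_pos he).le
    · exact ht.2
    · linarith [inv_add_inv_mul_sub_one he]
  calc |(d : ℝ) - e| / (2 * (d * e)) = 1 / 2 * ((d : ℝ)⁻¹ - (e : ℝ)⁻¹) := by
        have : (e : ℝ) ≠ 0 := by linarith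
        rw [abs_of_neg (by linarith)]
        field_simp
        ring
    _ ≤ lurothBranch d s - lurothBranch e t := by linarith
    _ ≤ |lurothBranch d s - lurothBranch e t| := le_abs_self _

lemma lurothT_iterate_succ_mem_Icc_half (hx : x ∈ Ioc (0 : ℝ) 1) (h : 3 ≤ lurothDigit (n + 2) x) :
    lurothT^[n + 1] x ∈ Icc (0 : ℝ) (1 / 2) :=
  have hmem := lurothT_iterate_mem_Ioc hx (n + 1)
  ⟨hmem.1.le, le_half_of_three_le_lurothD1 hmem h⟩

lemma abs_lurothDigit_sub_div_mul_prod_le_abs_sub (hx : x ∈ Ioc (0 : ℝ) 1) (hy : y ∈ Ioc (0 : ℝ) 1)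
    (h : ∀ i < n, lurothDigit (i + 1) x = lurothDigit (i + 1) y)
    (hx3 : 3 ≤ lurothDigit (n + 2) x) (hy3 : 3 ≤ lurothDigit (n + 2) y) :
    |(lurothDigit (n + 1) x : ℝ) - lurothDigit (n + 1) y| /
        (2 * (lurothDigit (n + 1) x * lurothDigit (n + 1) y)) *
      ∏ i ∈ Finset.range n, ((lurothDigit (i + 1) x : ℝ) * (lurothDigit (i + 1) x - 1))⁻¹ ≤
      |x - y| := by
  rw [abs_sub_eq_mul_prod_of_lurothDigit_eq hx hy h, ← lurothBranch_lurothDigit hx n,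
    ← lurothBranch_lurothDigit hy n]
  gcongr
  · exact Finset.prod_nonneg fun i _ => inv_nonneg.2 (natCast_mul_sub_one_nonneg _)
  · exact abs_natCast_sub_div_le_abs_lurothBranch_sub (two_le_lurothDigit hx _)
      (two_le_lurothDigit hy _) (lurothT_iterate_succ_mem_Icc_half hx hx3)
      (lurothT_iterate_succ_mem_Icc_half hy hy3)

lemma abs_lurothDigit_sub_div_le_abs_sub {M : ℕ → ℝ} (hx : x ∈ Ioc (0 : ℝ) 1)
    (hy : y ∈ Ioc (0 : ℝ) 1) (h : ∀ i < n, lurothDigit (i + 1) x = lurothDigit (i + 1) y)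
    (hx3 : 3 ≤ lurothDigit (n + 2) x) (hy3 : 3 ≤ lurothDigit (n + 2) y)
    (hxM : ∀ i ≤ n, lurothDigit (i + 1) x ≤ M i) (hyM : lurothDigit (n + 1) y ≤ M n) :
    |(lurothDigit (n + 1) x : ℝ) - lurothDigit (n + 1) y| /
      (2 * ∏ i ∈ Finset.range (n + 1), M i ^ 2) ≤ |x - y| := by
  have hdx (i : ℕ) : (2 : ℝ) ≤ lurothDigit i x := by exact_mod_cast two_le_lurothDigit hx i
  have hdy : (2 : ℝ) ≤ lurothDigit (n + 1) y := by exact_mod_cast two_le_lurothDigit hy (n + 1)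
  have hprod : ∏ i ∈ Finset.range n, (M i ^ 2)⁻¹ ≤
      ∏ i ∈ Finset.range n, ((lurothDigit (i + 1) x : ℝ) * (lurothDigit (i + 1) x - 1))⁻¹ := by
    refine Finset.prod_le_prod (fun i _ => by positivity) fun i hi => ?_
    refine inv_anti₀ (inv_pos.1 (inv_natCast_mul_sub_one_pos (two_le_lurothDigit hx _))) ?_
    have := hxM i (Finset.mem_range.1 hi).le
    rw [sq]
    exact mul_le_mul this (by linarith) (by linarith [hdx (i + 1)]) (by linarith [hdx (i + 1)])
  calc _ = |(lurothDigit (n + 1) x : ℝ) - lurothDigit (n + 1) y| / (2 * (M n * M n)) *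
        ∏ i ∈ Finset.range n, (M i ^ 2)⁻¹ := by
        rw [Finset.prod_range_succ, Finset.prod_inv_distrib, ← div_eq_mul_inv, div_div, sq (M n)]
        congr 1
        ring
    _ ≤ |(lurothDigit (n + 1) x : ℝ) - lurothDigit (n + 1) y| /
          (2 * (lurothDigit (n + 1) x * lurothDigit (n + 1) y)) * _ := by
        have := hxM n le_rfl
        have := hdx (n + 1)
        gcongr
        linarith
    _ ≤ |x - y| := abs_lurothDigit_sub_div_mul_prod_le_abs_sub hx hy h hx3 hy3

end LurothMap

section LurothSeries

/-- The point with Lüroth digits `D 0, D 1, …`, as the sum of its Lüroth series. -/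
noncomputable def lurothSum (D : ℕ → ℕ) : ℝ :=
  ∑' n, (D n : ℝ)⁻¹ * ∏ i ∈ Finset.range n, ((D i : ℝ) * (D i - 1))⁻¹

variable {D : ℕ → ℕ}

lemma lurothSum_term_nonneg (D : ℕ → ℕ) (n : ℕ) :
    0 ≤ (D n : ℝ)⁻¹ * ∏ i ∈ Finset.range n, ((D i : ℝ) * (D i - 1))⁻¹ :=
  mul_nonneg (by positivity)
    (Finset.prod_nonneg fun i _ => inv_nonneg.2 (natCast_mul_sub_one_nonneg _))

lemma lurothSum_term_le (hD : ∀ i, 2 ≤ D i) (n : ℕ) :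
    (D n : ℝ)⁻¹ * ∏ i ∈ Finset.range n, ((D i : ℝ) * (D i - 1))⁻¹ ≤ 1 / 2 * (1 / 2) ^ n := by
  have hD' (i : ℕ) : (2 : ℝ) ≤ D i := by exact_mod_cast hD i
  have hinv (i : ℕ) : ((D i : ℝ) * (D i - 1))⁻¹ ≤ 1 / 2 := by
    rw [one_div]
    exact inv_anti₀ two_pos (by nlinarith [hD' i])
  have hprod : ∏ i ∈ Finset.range n, ((D i : ℝ) * (D i - 1))⁻¹ ≤ (1 / 2) ^ n := by
    simpa using Finset.prod_le_prod (s := Finset.range n)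
      (fun i _ => inv_nonneg.2 (natCast_mul_sub_one_nonneg (D i))) fun i _ => hinv i
  gcongr
  · exact Finset.prod_nonneg fun i _ => inv_nonneg.2 (natCast_mul_sub_one_nonneg _)
  · rw [one_div]
    exact inv_anti₀ two_pos (hD' n)

lemma summable_lurothSum (hD : ∀ i, 2 ≤ D i) :
    Summable fun n => (D n : ℝ)⁻¹ * ∏ i ∈ Finset.range n, ((D i : ℝ) * (D i - 1))⁻¹ :=
  .of_nonneg_of_le (lurothSum_term_nonneg D) (lurothSum_term_le hD)
    (summable_geometric_two.mul_left _)

lemma lurothSum_eq_lurothBranch (hD : ∀ i, 2 ≤ D i) :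
    lurothSum D = lurothBranch (D 0) (lurothSum fun i => D (i + 1)) := by
  rw [lurothSum, (summable_lurothSum hD).tsum_eq_zero_add, lurothBranch, lurothSum,
    ← tsum_mul_right]
  simp only [Finset.prod_range_succ', Finset.range_zero, Finset.prod_empty, mul_one, mul_assoc]

lemma lurothSum_mem_Ioc (hD : ∀ i, 2 ≤ D i) : lurothSum D ∈ Ioc (0 : ℝ) 1 := by
  constructor
  · refine (summable_lurothSum hD).tsum_pos (lurothSum_term_nonneg D) 0 ?_
    have : 0 < D 0 := two_pos.trans_le (hD 0)
    simpa using this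
  · calc lurothSum D ≤ ∑' n : ℕ, 1 / 2 * (1 / 2 : ℝ) ^ n :=
          (summable_lurothSum hD).tsum_le_tsum (lurothSum_term_le hD)
            (summable_geometric_two.mul_left _)
      _ = 1 := by rw [tsum_mul_left, tsum_geometric_two]; norm_num

lemma lurothT_iterate_lurothSum (hD : ∀ i, 2 ≤ D i) (n : ℕ) :
    lurothT^[n] (lurothSum D) = lurothSum fun i => D (i + n) := by
  induction n with
  | zero => rfl
  | succ n ih =>
    rw [Function.iterate_succ_apply', ih, lurothSum_eq_lurothBranch fun i => hD (i + n),
      lurothT_lurothBranch (hD _) (lurothSum_mem_Ioc fun i => hD (i + 1 + n))]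
    simp only [add_right_comm, add_assoc]

lemma lurothDigit_lurothSum (hD : ∀ i, 2 ≤ D i) (n : ℕ) :
    lurothDigit (n + 1) (lurothSum D) = D n := by
  rw [lurothDigit, Nat.add_sub_cancel, lurothT_iterate_lurothSum hD,
    lurothSum_eq_lurothBranch fun i => hD (i + n),
    lurothD1_lurothBranch (hD _) (lurothSum_mem_Ioc fun i => hD (i + 1 + n)), zero_add]

end LurothSeries

section UpperBound

variable {n : ℕ} {x y : ℝ}

/-- The points of `(0, 1]` whose Lüroth digits start with the word `w` and whose following digit
is at least `exp q`. -/
def lurothBlock (w : Fin n → ℕ) (q : ℝ) : Set ℝ :=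
  {x | x ∈ Ioc (0 : ℝ) 1 ∧ (∀ i : Fin n, lurothDigit (i + 1) x = w i) ∧
    q ≤ Real.log (lurothDigit (n + 1) x)}

lemma lurothT_iterate_le_of_mem_lurothBlock {w : Fin n → ℕ} {q : ℝ} (hx : x ∈ lurothBlock w q) :
    lurothT^[n] x ≤ 2 * Real.exp (-q) := by
  have hd : (2 : ℝ) ≤ lurothDigit (n + 1) x := by exact_mod_cast two_le_lurothDigit hx.1 (n + 1)
  calc lurothT^[n] x ≤ ((lurothDigit (n + 1) x : ℝ) - 1)⁻¹ :=
        (mem_Ioc_inv_lurothD1 (lurothT_iterate_mem_Ioc hx.1 n)).2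
    _ ≤ ((lurothDigit (n + 1) x : ℝ) / 2)⁻¹ := inv_anti₀ (by linarith) (by linarith)
    _ = 2 * Real.exp (-Real.log (lurothDigit (n + 1) x)) := by
        rw [Real.exp_neg, Real.exp_log (by linarith), inv_div, div_eq_mul_inv]
    _ ≤ 2 * Real.exp (-q) := by
        gcongr
        exact hx.2.2

lemma abs_sub_le_of_mem_lurothBlock {w : Fin n → ℕ} {q : ℝ} (hx : x ∈ lurothBlock w q)
    (hy : y ∈ lurothBlock w q) :
    |x - y| ≤ 2 * Real.exp (-q) * ∏ i, ((w i : ℝ) * (w i - 1))⁻¹ := by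
  rw [abs_sub_eq_mul_prod_of_lurothDigit_eq (n := n) hx.1 hy.1
    fun i hi => (hx.2.1 ⟨i, hi⟩).trans (hy.2.1 ⟨i, hi⟩).symm, Finset.prod_range]
  simp only [hx.2.1]
  gcongr
  · exact Finset.prod_nonneg fun i _ => inv_nonneg.2 (natCast_mul_sub_one_nonneg _)
  · rw [abs_le]
    have hx0 := (lurothT_iterate_mem_Ioc hx.1 n).1
    have hy0 := (lurothT_iterate_mem_Ioc hy.1 n).1
    constructor <;>
      linarith [lurothT_iterate_le_of_mem_lurothBlock hx, lurothT_iterate_le_of_mem_lurothBlock hy]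

lemma exp_neg_mul_inv_mul_sub_one_le {d : ℕ} (hd : 2 ≤ d) (b K : ℝ) :
    Real.exp (-((b - 1) * Real.log d + K)) * ((d : ℝ) * (d - 1))⁻¹ ≤
      2 * Real.exp (-K) * (d : ℝ) ^ (-(1 + b)) := by
  have hd' : (2 : ℝ) ≤ d := by exact_mod_cast hd
  have hd0 : (0 : ℝ) < d := by linarith
  have hinv : ((d : ℝ) * (d - 1))⁻¹ ≤ 2 * (d : ℝ) ^ (-2 : ℝ) := by
    rw [Real.rpow_neg hd0.le, Real.rpow_two, ← div_eq_mul_inv, ← inv_div]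
    exact inv_anti₀ (by positivity) (by nlinarith)
  calc _ ≤ Real.exp (-((b - 1) * Real.log d + K)) * (2 * (d : ℝ) ^ (-2 : ℝ)) := by gcongr
    _ = 2 * Real.exp (-K) * (d : ℝ) ^ (-(1 + b)) := by
        rw [Real.rpow_def_of_pos hd0, Real.rpow_def_of_pos hd0, mul_left_comm, ← Real.exp_add,
          mul_assoc, ← Real.exp_add]
        ring_nf

lemma ediam_lurothBlock_rpow_le (w : Fin n → ℕ) (b K : ℝ) {s : ℝ} (hs : 0 ≤ s) :
    Metric.ediam (lurothBlock w (∑ i, ((b - 1) * Real.log (w i) + K))) ^ s ≤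
      2 ^ s * ∏ i, ENNReal.ofReal (2 * Real.exp (-K) * (w i : ℝ) ^ (-(1 + b))) ^ s := by
  rw [ENNReal.prod_rpow_of_nonneg hs, ← ENNReal.mul_rpow_of_nonneg _ _ hs,
    ← ENNReal.ofReal_prod_of_nonneg fun i _ => by positivity, ← ENNReal.ofReal_ofNat,
    ← ENNReal.ofReal_mul zero_le_two]
  gcongr
  refine Metric.ediam_le_of_forall_dist_le fun x hx y hy => ?_
  refine (abs_sub_le_of_mem_lurothBlock hx hy).trans ?_
  rw [← Finset.sum_neg_distrib, Real.exp_sum, mul_assoc, ← Finset.prod_mul_distrib]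
  gcongr 2 * ∏ i, ?_ with i
  · exact fun i _ => mul_nonneg (Real.exp_nonneg _) (inv_nonneg.2 (natCast_mul_sub_one_nonneg _))
  · exact exp_neg_mul_inv_mul_sub_one_le (hx.2.1 i ▸ two_le_lurothDigit hx.1 _) b K

lemma exists_tsum_ofReal_exp_neg_mul_rpow_lt_one {b s : ℝ} (hs : 0 < s) (h : 1 < (1 + b) * s) :
    ∃ K : ℝ, ∑' k : ℕ, ENNReal.ofReal (2 * Real.exp (-K) * (k : ℝ) ^ (-(1 + b))) ^ s < 1 := by
  set Z : ℝ≥0∞ := ∑' k : ℕ, ENNReal.ofReal ((k : ℝ) ^ (-(1 + b))) ^ s with hZ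
  have hZ_ne_top : Z ≠ ∞ := by
    have hsum : Summable fun k : ℕ => (k : ℝ) ^ (-(1 + b) * s) :=
      Real.summable_nat_rpow.2 (by linarith)
    have hpow (k : ℕ) : ENNReal.ofReal ((k : ℝ) ^ (-(1 + b))) ^ s =
        ENNReal.ofReal ((k : ℝ) ^ (-(1 + b) * s)) := by
      rw [ENNReal.ofReal_rpow_of_nonneg (by positivity) hs.le, Real.rpow_mul k.cast_nonneg]
    rw [hZ]
    simp only [hpow]
    exact hsum.tsum_ofReal_ne_top
  have hlim : Tendsto (fun K => ENNReal.ofReal (2 * Real.exp (-K)) ^ s * Z) atTop (𝓝 0) := by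
    have hexp : Tendsto (fun K => 2 * Real.exp (-K)) atTop (𝓝 0) := by
      simpa using (Real.tendsto_exp_neg_atTop_nhds_zero.const_mul 2)
    have hrpow := (ENNReal.tendsto_ofReal hexp).ennrpow_const s
    rw [ENNReal.ofReal_zero, ENNReal.zero_rpow_of_pos hs] at hrpow
    simpa using ENNReal.Tendsto.mul_const hrpow (.inr hZ_ne_top)
  obtain ⟨K, hK⟩ := (hlim.eventually_lt_const zero_lt_one).exists
  refine ⟨K, ?_⟩
  simpa only [ENNReal.ofReal_mul (by positivity : 0 ≤ 2 * Real.exp (-K)),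
    ENNReal.mul_rpow_of_nonneg _ _ hs.le, ENNReal.tsum_mul_left] using hK

lemma tsum_ediam_lurothBlock_rpow_ne_top {b K s : ℝ} (hs : 0 ≤ s)
    (hK : ∑' k : ℕ, ENNReal.ofReal (2 * Real.exp (-K) * (k : ℝ) ^ (-(1 + b))) ^ s < 1) :
    ∑' p : Σ n, (Fin n → ℕ),
      Metric.ediam (lurothBlock p.2 (∑ i, ((b - 1) * Real.log (p.2 i) + K))) ^ s ≠ ∞ := by
  refine ne_top_of_le_ne_top ?_
    (ENNReal.tsum_le_tsum fun p => ediam_lurothBlock_rpow_le p.2 b K hs)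
  rw [ENNReal.tsum_mul_left, ENNReal.tsum_sigma']
  simp only [tsum_prod_eq_tsum_pow fun k : ℕ =>
    ENNReal.ofReal (2 * Real.exp (-K) * (k : ℝ) ^ (-(1 + b))) ^ s, ENNReal.tsum_geometric]
  exact ENNReal.mul_ne_top (by finiteness) (ENNReal.inv_ne_top.2 (tsub_pos_of_lt hK).ne')

lemma dimH_le_of_frequently_log_lurothDigit {b : ℝ≥0} {F : Set ℝ} (hF : F ⊆ Ioc 0 1)
    (h : ∀ K : ℝ, ∀ x ∈ F, ∃ᶠ n in atTop,
      ∑ i ∈ Finset.range n, ((b - 1) * Real.log (lurothDigit (i + 1) x) + K) ≤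
        Real.log (lurothDigit (n + 1) x)) :
    dimH F ≤ 1 / (1 + b) := by
  refine le_of_forall_gt_imp_ge_of_dense fun r hr => ?_
  obtain ⟨s, hbs, hsr⟩ := ENNReal.lt_iff_exists_nnreal_btwn.1 hr
  refine le_trans ?_ hsr.le
  have hbs' : 1 < (1 + (b : ℝ)) * s := by
    rw [ENNReal.div_lt_iff (by simp) (by simp), mul_comm] at hbs
    exact_mod_cast hbs
  have hs : 0 < s :=
    NNReal.coe_pos.1 (pos_of_mul_pos_right (zero_lt_one.trans hbs') (by positivity))
  obtain ⟨K, hK⟩ := exists_tsum_ofReal_exp_neg_mul_rpow_lt_one hs hbs'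
  refine dimH_le_of_frequently_mem hs (fun x hx => ?_)
    (tsum_ediam_lurothBlock_rpow_ne_top s.coe_nonneg hK)
  let digitWord (n : ℕ) : Σ n, (Fin n → ℕ) := ⟨n, fun i => lurothDigit (i + 1) x⟩
  have hinj : Function.Injective digitWord := fun m n hmn => congrArg Sigma.fst hmn
  have htendsto := hinj.tendsto_cofinite
  rw [Nat.cofinite_eq_atTop] at htendsto
  refine htendsto.frequently ((h K x hx).mono fun n hn => ⟨hF hx, fun i => rfl, ?_⟩)
  rwa [← Finset.sum_range fun i => ((b : ℝ) - 1) * Real.log (lurothDigit (i + 1) x) + K]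

end UpperBound

section MixedRadix

variable {N : ℕ → ℕ} {y z : ℝ} {n : ℕ}

/-- The remainders of the expansion of `y` in the mixed radix `N`. -/
noncomputable def radixRem (N : ℕ → ℕ) (y : ℝ) : ℕ → ℝ
  | 0 => y
  | n + 1 => Int.fract (N n * radixRem N y n)

/-- The digits of the expansion of `y` in the mixed radix `N`. -/
noncomputable def radixDigit (N : ℕ → ℕ) (y : ℝ) (n : ℕ) : ℕ := ⌊N n * radixRem N y n⌋₊

lemma radixRem_mem_Ico (hy : y ∈ Ico (0 : ℝ) 1) (n : ℕ) : radixRem N y n ∈ Ico (0 : ℝ) 1 := by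
  cases n with
  | zero => exact hy
  | succ n => exact ⟨Int.fract_nonneg _, Int.fract_lt_one _⟩

lemma abs_radixRem_sub_le_one (hy : y ∈ Ico (0 : ℝ) 1) (hz : z ∈ Ico (0 : ℝ) 1) (n : ℕ) :
    |radixRem N y n - radixRem N z n| ≤ 1 :=
  Real.dist_le_of_mem_Icc_01 (Ico_subset_Icc_self (radixRem_mem_Ico hy n))
    (Ico_subset_Icc_self (radixRem_mem_Ico hz n))

lemma mul_radixRem (hy : y ∈ Ico (0 : ℝ) 1) (n : ℕ) :
    N n * radixRem N y n = radixDigit N y n + radixRem N y (n + 1) := by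
  have h : 0 ≤ N n * radixRem N y n := mul_nonneg (N n).cast_nonneg (radixRem_mem_Ico hy n).1
  rw [radixDigit, natCast_floor_eq_intCast_floor h]
  exact (Int.floor_add_fract _).symm

lemma radixDigit_lt (hn : 0 < N n) (hy : y ∈ Ico (0 : ℝ) 1) : radixDigit N y n < N n := by
  have hlt : N n * radixRem N y n < N n :=
    mul_lt_of_lt_one_right (Nat.cast_pos.2 hn) (radixRem_mem_Ico hy n).2
  rw [mul_radixRem hy] at hlt
  exact_mod_cast (le_add_of_nonneg_right (radixRem_mem_Ico hy (n + 1)).1).trans_lt hlt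

lemma natCast_mul_abs_radixRem_sub (hy : y ∈ Ico (0 : ℝ) 1) (hz : z ∈ Ico (0 : ℝ) 1) (n : ℕ) :
    N n * |radixRem N y n - radixRem N z n| =
      |((radixDigit N y n : ℝ) - radixDigit N z n) +
        (radixRem N y (n + 1) - radixRem N z (n + 1))| := by
  rw [← add_sub_add_comm, ← mul_radixRem hy, ← mul_radixRem hz, ← mul_sub, abs_mul, Nat.abs_cast]

lemma prod_mul_abs_sub_eq_abs_radixRem_sub (hy : y ∈ Ico (0 : ℝ) 1) (hz : z ∈ Ico (0 : ℝ) 1)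
    (h : ∀ i < n, radixDigit N y i = radixDigit N z i) :
    (∏ i ∈ Finset.range n, (N i : ℝ)) * |y - z| = |radixRem N y n - radixRem N z n| := by
  induction n with
  | zero => simp [radixRem]
  | succ n ih =>
    rw [Finset.prod_range_succ_comm, mul_assoc, ih fun i hi => h i (by omega),
      natCast_mul_abs_radixRem_sub hy hz, h n n.lt_succ_self, sub_self, zero_add]

lemma one_le_abs_natCast_sub {a b : ℕ} (h : a ≠ b) : 1 ≤ |(a : ℝ) - b| := by
  simpa [Nat.dist_eq] using Nat.pairwise_one_le_dist h

lemma prod_mul_abs_sub_le_two_mul_abs_radixDigit_sub (hy : y ∈ Ico (0 : ℝ) 1)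
    (hz : z ∈ Ico (0 : ℝ) 1) (h : ∀ i < n, radixDigit N y i = radixDigit N z i)
    (hn : radixDigit N y n ≠ radixDigit N z n) :
    (∏ i ∈ Finset.range (n + 1), (N i : ℝ)) * |y - z| ≤
      2 * |(radixDigit N y n : ℝ) - radixDigit N z n| := by
  rw [Finset.prod_range_succ_comm, mul_assoc, prod_mul_abs_sub_eq_abs_radixRem_sub hy hz h,
    natCast_mul_abs_radixRem_sub hy hz, two_mul]
  refine (abs_add_le _ _).trans (add_le_add_right ?_ _)
  exact (abs_radixRem_sub_le_one hy hz (n + 1)).trans (one_le_abs_natCast_sub hn)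

lemma exists_first_radixDigit_ne (hN : ∀ n, 2 ≤ N n) (hy : y ∈ Ico (0 : ℝ) 1)
    (hz : z ∈ Ico (0 : ℝ) 1) (hyz : y ≠ z) :
    ∃ n, (∀ i < n, radixDigit N y i = radixDigit N z i) ∧
      radixDigit N y n ≠ radixDigit N z n := by
  have hex : ∃ n, radixDigit N y n ≠ radixDigit N z n := by
    by_contra! heq
    obtain ⟨n, hn⟩ := pow_unbounded_of_one_lt |y - z|⁻¹ (one_lt_two (α := ℝ))
    have hprod : (2 : ℝ) ^ n ≤ ∏ i ∈ Finset.range n, (N i : ℝ) := by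
      simpa using Finset.prod_le_prod (s := Finset.range n) (f := fun _ => (2 : ℝ))
        (fun _ _ => zero_le_two) fun i _ => Nat.ofNat_le_cast.2 (hN i)
    have hle := prod_mul_abs_sub_eq_abs_radixRem_sub (N := N) hy hz (n := n) fun i _ => heq i
    have hpos : 0 < |y - z| := abs_pos.2 (sub_ne_zero.2 hyz)
    rw [inv_lt_iff_one_lt_mul₀ hpos] at hn
    refine (hn.trans_le (mul_le_mul_of_nonneg_right hprod hpos.le)).not_ge ?_
    exact hle.trans_le (abs_radixRem_sub_le_one hy hz n)
  classical
  exact ⟨Nat.find hex, fun i hi => not_not.1 (Nat.find_min hex hi), Nat.find_spec hex⟩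

end MixedRadix

section LurothOfRadix

variable {N : ℕ → ℕ} {y z : ℝ} {n : ℕ}

/-- The point whose Lüroth digits are obtained from the mixed radix digits of `y` by shifting the
`n`-th of them from `[0, N n)` to `[N n, 2 N n)`. -/
noncomputable def lurothOfRadix (N : ℕ → ℕ) (y : ℝ) : ℝ :=
  lurothSum fun n => N n + radixDigit N y n

lemma lurothOfRadix_mem_Ioc (hN : ∀ n, 2 ≤ N n) (y : ℝ) : lurothOfRadix N y ∈ Ioc (0 : ℝ) 1 :=
  lurothSum_mem_Ioc fun n => (hN n).trans (Nat.le_add_right _ _)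

lemma lurothDigit_lurothOfRadix (hN : ∀ n, 2 ≤ N n) (y : ℝ) (n : ℕ) :
    lurothDigit (n + 1) (lurothOfRadix N y) = N n + radixDigit N y n :=
  lurothDigit_lurothSum (fun n => (hN n).trans (Nat.le_add_right _ _)) n

lemma lurothDigit_lurothOfRadix_le (hN : ∀ n, 2 ≤ N n) (hy : y ∈ Ico (0 : ℝ) 1) (n : ℕ) :
    (lurothDigit (n + 1) (lurothOfRadix N y) : ℝ) ≤ 2 * N n := by
  have hlt := radixDigit_lt (two_pos.trans_le (hN n)) hy
  rw [lurothDigit_lurothOfRadix hN]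
  exact_mod_cast (by omega : N n + radixDigit N y n ≤ 2 * N n)

lemma log_lurothDigit_lurothOfRadix_mem_Icc (hN : ∀ n, 2 ≤ N n) (hy : y ∈ Ico (0 : ℝ) 1) (n : ℕ) :
    Real.log (lurothDigit (n + 1) (lurothOfRadix N y)) ∈
      Icc (Real.log (N n)) (Real.log (N n) + Real.log 2) := by
  have hpos : (0 : ℝ) < N n := Nat.cast_pos.2 (two_pos.trans_le (hN n))
  have hle : (N n : ℝ) ≤ lurothDigit (n + 1) (lurothOfRadix N y) := by
    rw [lurothDigit_lurothOfRadix hN]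
    exact_mod_cast Nat.le_add_right _ _
  rw [add_comm, ← Real.log_mul two_ne_zero hpos.ne']
  exact ⟨Real.log_le_log hpos hle,
    Real.log_le_log (hpos.trans_le hle) (lurothDigit_lurothOfRadix_le hN hy n)⟩

lemma abs_radixDigit_sub_div_le_abs_lurothOfRadix_sub (hN : ∀ n, 3 ≤ N n)
    (hy : y ∈ Ico (0 : ℝ) 1) (hz : z ∈ Ico (0 : ℝ) 1)
    (h : ∀ i < n, radixDigit N y i = radixDigit N z i) :
    |(radixDigit N y n : ℝ) - radixDigit N z n| /
        (2 * ∏ i ∈ Finset.range (n + 1), (2 * N i : ℝ) ^ 2) ≤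
      |lurothOfRadix N y - lurothOfRadix N z| := by
  have hN2 (n : ℕ) : 2 ≤ N n := Nat.le_of_succ_le (hN n)
  have hdigit := lurothDigit_lurothOfRadix hN2
  have hsep := abs_lurothDigit_sub_div_le_abs_sub (M := fun i => 2 * N i)
    (lurothOfRadix_mem_Ioc hN2 y) (lurothOfRadix_mem_Ioc hN2 z)
    (fun i hi => by rw [hdigit, hdigit, h i hi])
    (by rw [hdigit]; exact (hN _).trans (Nat.le_add_right _ _))
    (by rw [hdigit]; exact (hN _).trans (Nat.le_add_right _ _))
    (fun i _ => lurothDigit_lurothOfRadix_le hN2 hy i) (lurothDigit_lurothOfRadix_le hN2 hz n)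
  simpa only [hdigit, Nat.cast_add, add_sub_add_left_eq_sub] using hsep

lemma abs_radixDigit_sub_le (hn : 0 < N n) (hy : y ∈ Ico (0 : ℝ) 1) (hz : z ∈ Ico (0 : ℝ) 1) :
    |(radixDigit N y n : ℝ) - radixDigit N z n| ≤ N n :=
  abs_sub_le_of_nonneg_of_le (Nat.cast_nonneg _) (Nat.cast_le.2 (radixDigit_lt hn hy).le)
    (Nat.cast_nonneg _) (Nat.cast_le.2 (radixDigit_lt hn hz).le)

lemma sum_log_add_log_abs_sub_le (hN : ∀ n, 0 < N n) (hy : y ∈ Ico (0 : ℝ) 1)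
    (hz : z ∈ Ico (0 : ℝ) 1) (h : ∀ i < n, radixDigit N y i = radixDigit N z i)
    (hn : radixDigit N y n ≠ radixDigit N z n) :
    ∑ i ∈ Finset.range (n + 1), Real.log (N i) + Real.log |y - z| ≤
      Real.log 2 + Real.log |(radixDigit N y n : ℝ) - radixDigit N z n| := by
  have hN' (n : ℕ) : (0 : ℝ) < N n := Nat.cast_pos.2 (hN n)
  have hyz : 0 < |y - z| := abs_pos.2 (sub_ne_zero.2 fun hyz => hn (by rw [hyz]))
  have hk : |(radixDigit N y n : ℝ) - radixDigit N z n| ≠ 0 :=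
    (zero_lt_one.trans_le (one_le_abs_natCast_sub hn)).ne'
  have hprod : 0 < ∏ i ∈ Finset.range (n + 1), (N i : ℝ) := Finset.prod_pos fun i _ => hN' i
  rw [← Real.log_prod fun i _ => (hN' i).ne', ← Real.log_mul hprod.ne' hyz.ne',
    ← Real.log_mul two_ne_zero hk]
  exact Real.log_le_log (mul_pos hprod hyz)
    (prod_mul_abs_sub_le_two_mul_abs_radixDigit_sub hy hz h hn)

lemma log_abs_radixDigit_sub_le (hN : ∀ n, 3 ≤ N n) (hy : y ∈ Ico (0 : ℝ) 1)
    (hz : z ∈ Ico (0 : ℝ) 1) (h : ∀ i < n, radixDigit N y i = radixDigit N z i)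
    (hn : radixDigit N y n ≠ radixDigit N z n) :
    Real.log |(radixDigit N y n : ℝ) - radixDigit N z n| -
        (Real.log 2 + ∑ i ∈ Finset.range (n + 1), 2 * (Real.log 2 + Real.log (N i))) ≤
      Real.log |lurothOfRadix N y - lurothOfRadix N z| := by
  have hN' (n : ℕ) : (0 : ℝ) < N n := Nat.cast_pos.2 (three_pos.trans_le (hN n))
  have hk : 0 < |(radixDigit N y n : ℝ) - radixDigit N z n| :=
    zero_lt_one.trans_le (one_le_abs_natCast_sub hn)
  have hfactor (i : ℕ) : 0 < (2 * N i : ℝ) ^ 2 := by have := hN' i; positivity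
  have hprod : 0 < ∏ i ∈ Finset.range (n + 1), (2 * N i : ℝ) ^ 2 :=
    Finset.prod_pos fun i _ => hfactor i
  refine le_of_eq_of_le ?_ (Real.log_le_log (by positivity)
    (abs_radixDigit_sub_div_le_abs_lurothOfRadix_sub hN hy hz h))
  rw [Real.log_div hk.ne' (by positivity), Real.log_mul two_ne_zero hprod.ne',
    Real.log_prod fun i _ => (hfactor i).ne']
  congr! 3 with i
  rw [Real.log_pow, Real.log_mul two_ne_zero (hN' i).ne', Nat.cast_ofNat]

lemma abs_sub_le_exp_mul_abs_lurothOfRadix_sub_rpow (hN : ∀ n, 3 ≤ N n) {s C : ℝ} (hs0 : 0 < s)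
    (hs1 : s ≤ 1)
    (hC : ∀ n : ℕ, s * Real.log (N n) + 2 * s * Real.log 2 * (n + 1) ≤
      (1 - 2 * s) * ∑ i ∈ Finset.range n, Real.log (N i) + C)
    (hy : y ∈ Ico (0 : ℝ) 1) (hz : z ∈ Ico (0 : ℝ) 1) :
    |y - z| ≤ Real.exp (C + (1 + s) * Real.log 2) *
      |lurothOfRadix N y - lurothOfRadix N z| ^ s := by
  obtain rfl | hyz := eq_or_ne y z
  · simp [Real.zero_rpow hs0.ne']
  have hN2 (n : ℕ) : 2 ≤ N n := Nat.le_of_succ_le (hN n)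
  have hN0 (n : ℕ) : 0 < N n := two_pos.trans_le (hN2 n)
  obtain ⟨n, heq, hne⟩ := exists_first_radixDigit_ne hN2 hy hz hyz
  have himage : lurothOfRadix N y ≠ lurothOfRadix N z := fun h => hne <| by
    simpa only [lurothDigit_lurothOfRadix hN2, Nat.add_left_cancel_iff] using
      congrArg (lurothDigit (n + 1)) h
  have hpos : 0 < |lurothOfRadix N y - lurothOfRadix N z| := abs_pos.2 (sub_ne_zero.2 himage)
  rw [← Real.log_le_log_iff (abs_pos.2 (sub_ne_zero.2 hyz)) (by positivity),
    Real.log_mul (Real.exp_ne_zero _) (by positivity), Real.log_exp, Real.log_rpow hpos]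
  set k : ℝ := |(radixDigit N y n : ℝ) - radixDigit N z n|
  have hk : (1 - s) * Real.log k ≤ (1 - s) * Real.log (N n) :=
    mul_le_mul_of_nonneg_left (Real.log_le_log (zero_lt_one.trans_le (one_le_abs_natCast_sub hne))
      (abs_radixDigit_sub_le (hN0 n) hy hz)) (sub_nonneg.2 hs1)
  have hupper := sum_log_add_log_abs_sub_le hN0 hy hz heq hne
  have hlower := log_abs_radixDigit_sub_le hN hy hz heq hne
  rw [← Finset.mul_sum, Finset.sum_add_distrib, Finset.sum_const, Finset.card_range,
    nsmul_eq_mul] at hlower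
  rw [Finset.sum_range_succ] at hupper hlower
  push_cast at hlower
  linear_combination hupper + s * hlower + hk + hC n

lemma le_dimH_image_lurothOfRadix (hN : ∀ n, 3 ≤ N n) {s : ℝ≥0} {C : ℝ} (hs1 : s ≤ 1)
    (hC : ∀ n : ℕ, s * Real.log (N n) + 2 * s * Real.log 2 * (n + 1) ≤
      (1 - 2 * s) * ∑ i ∈ Finset.range n, Real.log (N i) + C) :
    s ≤ dimH (lurothOfRadix N '' Ico 0 1) := by
  obtain rfl | hs0 := eq_zero_or_pos s
  · simp
  have hdim : dimH (Ico (0 : ℝ) 1) = 1 := by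
    rw [Real.dimH_of_nonempty_interior (by simp), Module.finrank_self, Nat.cast_one]
  have hmul := mul_dimH_le_dimH_image_of_edist_le (g := lurothOfRadix N) (S := Ico 0 1)
    (C := (Real.exp (C + (1 + s) * Real.log 2)).toNNReal) hs0 fun y hy z hz => ?_
  · rwa [hdim, mul_one] at hmul
  · rw [edist_dist, edist_dist, ENNReal.ofReal_rpow_of_nonneg dist_nonneg s.coe_nonneg]
    refine (ENNReal.ofReal_le_ofReal (abs_sub_le_exp_mul_abs_lurothOfRadix_sub_rpow hN hs0 hs1 hC
      hy hz)).trans_eq ?_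
    exact ENNReal.ofReal_mul (Real.exp_nonneg _)

end LurothOfRadix

section LowerBound

lemma exists_natCast_log_mem_Icc {t : ℝ} (ht : 0 ≤ t) :
    ∃ N : ℕ, 3 ≤ N ∧ Real.log N ∈ Icc t (t + Real.log 4) := by
  have hceil : 0 < ⌈Real.exp t⌉₊ := Nat.ceil_pos.2 (Real.exp_pos t)
  have hpos : (0 : ℝ) < (⌈Real.exp t⌉₊ + 2 : ℕ) := by positivity
  refine ⟨⌈Real.exp t⌉₊ + 2, by omega, (Real.le_log_iff_exp_le hpos).2 ?_,
    (Real.log_le_iff_le_exp hpos).2 ?_⟩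
  · exact (Nat.le_ceil _).trans (by simp)
  · rw [Real.exp_add, Real.exp_log four_pos]
    push_cast
    linarith [Nat.ceil_lt_add_one (Real.exp_pos t).le, Real.one_le_exp ht]

lemma exists_forall_mul_add_mul_le_mul_sum_range_add {c : ℕ → ℝ} {B s : ℝ}
    (hc : Tendsto c atTop atTop) (hstep : ∀ n, c (n + 1) ≤ B * c n) (hs : 0 ≤ s)
    (hsB : s * (1 + B) < 1) (K : ℝ) :
    ∃ C, ∀ n : ℕ, s * c n + K * n ≤ (1 - 2 * s) * ∑ i ∈ Finset.range n, c i + C := by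
  have hlast (n : ℕ) : c n ≤ (B - 1) * ∑ i ∈ Finset.range n, c i + c 0 := by
    induction n with
    | zero => simp
    | succ n ih =>
      rw [Finset.sum_range_succ]
      linarith [hstep n]
  have hδ : 0 < 1 - s * (1 + B) := sub_pos.2 hsB
  obtain ⟨C, hC⟩ := exists_forall_mul_le_sum_range_add hc (K / (1 - s * (1 + B)))
  refine ⟨s * c 0 + (1 - s * (1 + B)) * C, fun n => ?_⟩
  have hK := mul_le_mul_of_nonneg_left (hC n) hδ.le
  rw [← mul_assoc, mul_div_cancel₀ _ hδ.ne'] at hK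
  linear_combination s * hlast n + hK

/-- The points of `(0, 1]` whose logarithmic Lüroth digits stay in the windows `[c n, c n + K]`.
The index is shifted by one, since the digits of the expansion start at `n = 1`. -/
def lurothTube (c : ℕ → ℝ) (K : ℝ) : Set ℝ :=
  {x | x ∈ Ioc (0 : ℝ) 1 ∧ ∀ n, Real.log (lurothDigit (n + 1) x) ∈ Icc (c n) (c n + K)}

lemma one_div_one_add_le_dimH_lurothTube {c : ℕ → ℝ} {B : ℝ≥0} (hB : 1 ≤ B)
    (hc : Tendsto c atTop atTop) (hc0 : ∀ n, 0 ≤ c n) (hstep : ∀ n, c (n + 1) ≤ B * c n) :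
    1 / (1 + B) ≤ dimH (lurothTube c (Real.log 8)) := by
  refine ENNReal.le_of_forall_nnreal_lt fun s hs => ?_
  rw [ENNReal.lt_div_iff_mul_lt (by simp) (by simp)] at hs
  have hsB : (s : ℝ) * (1 + B) < 1 := by exact_mod_cast hs
  have hs2 : 0 ≤ 1 - 2 * (s : ℝ) := by
    have := mul_le_mul_of_nonneg_left (NNReal.coe_le_coe.2 hB) s.coe_nonneg
    push_cast at this
    linarith
  choose N hN hlogN using fun n => exists_natCast_log_mem_Icc (hc0 n)
  have hN2 (n : ℕ) : 2 ≤ N n := Nat.le_of_succ_le (hN n)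
  obtain ⟨C, hC⟩ := exists_forall_mul_add_mul_le_mul_sum_range_add hc hstep s.coe_nonneg hsB
    (2 * s * Real.log 2)
  refine (le_dimH_image_lurothOfRadix (N := N) (C := C + s * Real.log 4 + 2 * s * Real.log 2) hN
    (NNReal.coe_le_coe.1 (by simp; linarith [s.coe_nonneg])) fun n => ?_).trans (dimH_mono ?_)
  · have hlast := mul_le_mul_of_nonneg_left (hlogN n).2 s.coe_nonneg
    have hsum := mul_le_mul_of_nonneg_left
      (Finset.sum_le_sum fun i (_ : i ∈ Finset.range n) => (hlogN i).1) hs2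
    linear_combination hlast + hsum + hC n
  · rintro _ ⟨y, hy, rfl⟩
    refine ⟨lurothOfRadix_mem_Ioc hN2 y, fun n => ?_⟩
    have hdigit := log_lurothDigit_lurothOfRadix_mem_Icc hN2 hy n
    have hlog8 : Real.log 8 = Real.log 4 + Real.log 2 := by
      rw [← Real.log_mul four_ne_zero two_ne_zero]
      norm_num
    refine ⟨(hlogN n).1.trans hdigit.1, hdigit.2.trans ?_⟩
    linarith [(hlogN n).2]

end LowerBound

section RatioMinorant

/-- The largest sequence below `u` whose successive ratios are at most `B`. -/
noncomputable def ratioMinorant (u : ℕ → ℝ) (B : ℝ) : ℕ → ℝ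
  | 0 => u 0
  | n + 1 => min (B * ratioMinorant u B n) (u (n + 1))

variable {u : ℕ → ℝ} {B : ℝ}

lemma ratioMinorant_le (n : ℕ) : ratioMinorant u B n ≤ u n := by
  cases n with
  | zero => exact le_rfl
  | succ n => exact min_le_right _ _

lemma ratioMinorant_succ_le (n : ℕ) : ratioMinorant u B (n + 1) ≤ B * ratioMinorant u B n :=
  min_le_left _ _

lemma ratioMinorant_pos (hB : 0 < B) (hu : ∀ n, 0 < u n) (n : ℕ) : 0 < ratioMinorant u B n := by
  induction n with
  | zero => exact hu 0
  | succ n ih => exact lt_min (mul_pos hB ih) (hu _)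

lemma min_pow_mul_ratioMinorant_le {M : ℝ} {m : ℕ} (hB : 1 ≤ B) (hM : 0 ≤ M)
    (hu : ∀ n ≥ m, M ≤ u n) (k : ℕ) :
    min (B ^ k * ratioMinorant u B m) M ≤ ratioMinorant u B (m + k) := by
  induction k with
  | zero => simp
  | succ k ih =>
    refine le_min ?_ ((min_le_right _ _).trans (hu _ (Nat.le_add_right m (k + 1))))
    calc min (B ^ (k + 1) * ratioMinorant u B m) M
        ≤ min (B * (B ^ k * ratioMinorant u B m)) (B * M) := by
          rw [← mul_assoc, ← pow_succ']
          exact min_le_min_left _ (le_mul_of_one_le_left hM hB)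
      _ = B * min (B ^ k * ratioMinorant u B m) M :=
          (mul_min_of_nonneg _ _ (zero_le_one.trans hB)).symm
      _ ≤ B * ratioMinorant u B (m + k) := by gcongr

lemma tendsto_ratioMinorant (hB : 1 < B) (hu0 : ∀ n, 0 < u n) (hu : Tendsto u atTop atTop) :
    Tendsto (ratioMinorant u B) atTop atTop := by
  refine tendsto_atTop.2 fun M => ?_
  obtain ⟨m, hm⟩ := eventually_atTop.1 (hu.eventually_ge_atTop (max M 0))
  have hlim : Tendsto (fun k => B ^ k * ratioMinorant u B m) atTop atTop :=
    (tendsto_pow_atTop_atTop_of_one_lt hB).atTop_mul_const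
      (ratioMinorant_pos (zero_lt_one.trans hB) hu0 m)
  obtain ⟨k, hk⟩ := eventually_atTop.1 (hlim.eventually_ge_atTop (max M 0))
  refine eventually_atTop.2 ⟨m + k, fun n hn => ?_⟩
  obtain ⟨j, rfl⟩ := Nat.exists_eq_add_of_le (le_of_add_le_left hn)
  exact (le_max_left M 0).trans ((le_min (hk j (Nat.add_le_add_iff_left.1 hn)) le_rfl).trans
    (min_pow_mul_ratioMinorant_le hB.le (le_max_right M 0) hm j))

lemma frequently_ratioMinorant_eq (hB : 0 < B) (hu : ∀ n, 0 < u n)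
    (h : ¬(B ^ ·) =O[atTop] u) : ∃ᶠ n in atTop, ratioMinorant u B n = u n := by
  contrapose! h
  obtain ⟨m, hm⟩ := eventually_atTop.1 h
  have hpos := ratioMinorant_pos hB hu
  have hstep (n : ℕ) (hn : m ≤ n) : B * ratioMinorant u B n ≤ ratioMinorant u B (n + 1) :=
    ((min_choice _ _).resolve_right (hm (n + 1) (by omega))).ge
  refine .of_bound (B ^ m / ratioMinorant u B m) (eventually_atTop.2 ⟨m, fun n hn => ?_⟩)
  obtain ⟨k, rfl⟩ := Nat.exists_eq_add_of_le hn
  have hgeom : B ^ k * ratioMinorant u B m ≤ ratioMinorant u B (m + k) :=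
    geom_le (u := fun k => ratioMinorant u B (m + k)) hB.le k fun j _ =>
      hstep (m + j) (Nat.le_add_right _ _)
  rw [Real.norm_of_nonneg (by positivity), Real.norm_of_nonneg (hu _).le, pow_add,
    div_mul_eq_mul_div, mul_div_assoc]
  refine mul_le_mul_of_nonneg_left ?_ (by positivity)
  exact (le_div_iff₀ (hpos m)).2 (hgeom.trans (ratioMinorant_le _))

end RatioMinorant

section Esup

/-- The set `E_sup(ψ)` of the points of `(0, 1]` whose logarithmic Lüroth digits have upper growth
rate `ψ`. -/
def lurothEsup (ψ : ℕ → ℝ) : Set ℝ :=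
  {x | x ∈ Ioc (0 : ℝ) 1 ∧
    limsup (fun n : ℕ => Real.log (lurothDigit n x) / ψ n) atTop = 1}

variable {ψ : ℕ → ℝ}

lemma lurothTube_subset_lurothEsup {c : ℕ → ℝ} {K : ℝ} (hψ : Tendsto ψ atTop atTop)
    (hcψ : ∀ n, c n ≤ ψ (n + 1)) (hfreq : ∃ᶠ n in atTop, c n = ψ (n + 1)) :
    lurothTube c K ⊆ lurothEsup ψ := by
  rintro x ⟨hx, hxc⟩
  refine ⟨hx, ?_⟩
  rw [← limsup_nat_add _ 1]
  exact limsup_div_eq_one_of_le_add_of_frequently_le (hψ.comp (tendsto_add_atTop_nat 1))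
    (fun n => Real.log_natCast_nonneg _) (fun n => (hxc n).2.trans (by gcongr; exact hcψ n))
    (hfreq.mono fun n hn => hn.ge.trans (hxc n).1)

lemma one_div_one_add_le_dimH_lurothEsup (hpos : ∀ n, 1 ≤ n → 0 < ψ n)
    (hψ : Tendsto ψ atTop atTop) {B : ℝ≥0} (hB : 1 < B)
    (hψB : ¬(fun n : ℕ => (B : ℝ) ^ n) =O[atTop] ψ) : 1 / (1 + B) ≤ dimH (lurothEsup ψ) := by
  have hB1 : (1 : ℝ) < B := hB
  have hB0 : (0 : ℝ) < B := zero_lt_one.trans hB1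
  have hpos' (n : ℕ) : 0 < ψ (n + 1) := hpos _ n.succ_pos
  have hshift : ¬(fun n : ℕ => (B : ℝ) ^ n) =O[atTop] fun n => ψ (n + 1) := fun h => hψB <| by
    rw [← map_add_atTop_eq_nat 1, Asymptotics.isBigO_map]
    simpa only [Function.comp_def, pow_succ'] using h.const_mul_left (B : ℝ)
  refine (one_div_one_add_le_dimH_lurothTube hB.le (tendsto_ratioMinorant hB1 hpos'
    (hψ.comp (tendsto_add_atTop_nat 1))) (fun n => (ratioMinorant_pos hB0 hpos' n).le)
    ratioMinorant_succ_le).trans (dimH_mono ?_)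
  exact lurothTube_subset_lurothEsup hψ ratioMinorant_le
    (frequently_ratioMinorant_eq hB0 hpos' hshift)

lemma not_isBigO_log_lurothDigit {g : ℕ → ℝ} {x : ℝ} (hx : x ∈ lurothEsup ψ)
    (hg : g =o[atTop] fun n => ψ (n + 1)) :
    ¬(fun n => Real.log (lurothDigit (n + 1) x)) =O[atTop] g := by
  intro h
  have hlim := (h.trans_isLittleO hg).tendsto_div_nhds_zero.limsup_eq
  rw [limsup_nat_add (fun n => Real.log (lurothDigit n x) / ψ n) 1, hx.2] at hlim
  exact one_ne_zero hlim

lemma dimH_lurothEsup_le_of_isLittleO_pow {b : ℝ≥0} (hb : 1 < b)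
    (hψ : (fun n : ℕ => (b : ℝ) ^ n) =o[atTop] ψ) : dimH (lurothEsup ψ) ≤ 1 / (1 + b) := by
  have hb' : (1 : ℝ) < b := hb
  have hshift : (fun n : ℕ => (b : ℝ) ^ n) =o[atTop] fun n => ψ (n + 1) := by
    have := hψ.comp_tendsto (tendsto_add_atTop_nat 1)
    simp only [Function.comp_def, pow_succ'] at this
    exact (Asymptotics.isLittleO_const_mul_left_iff (zero_lt_one.trans hb').ne').1 this
  exact dimH_le_of_frequently_log_lurothDigit (fun x hx => hx.1) fun K x hx =>
    frequently_sum_range_le_of_not_isBigO_pow hb' (fun n => Real.log_natCast_nonneg _)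
      (not_isBigO_log_lurothDigit hx hshift) K

lemma dimH_lurothEsup_le_of_isLittleO_natCast (hψ : (fun n : ℕ => (n : ℝ)) =o[atTop] ψ) :
    dimH (lurothEsup ψ) ≤ 1 / (1 + 1) := by
  have hshift : (fun n : ℕ => (n : ℝ)) =o[atTop] fun n => ψ (n + 1) := by
    refine Asymptotics.IsBigO.trans_isLittleO (.of_norm_le fun n => ?_)
      (hψ.comp_tendsto (tendsto_add_atTop_nat 1))
    simp
  refine dimH_le_of_frequently_log_lurothDigit (b := 1) (fun x hx => hx.1) fun K x hx => ?_
  simpa [mul_comm] using frequently_mul_le_of_not_isBigO_natCast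
    (fun n => Real.log_natCast_nonneg _) (not_isBigO_log_lurothDigit hx hshift) K

end Esup

theorem dimH_luroth_Esup_psi_fast (ψ : ℕ → ℝ) (hpos : ∀ n : ℕ, 1 ≤ n → 0 < ψ n)
    (hψ : Tendsto ψ atTop atTop)
    (hfast : Tendsto (fun n : ℕ => ψ n / n) atTop atTop) (A : ℝ≥0∞)
    (hA : ENNReal.log A =
      Filter.liminf (fun n : ℕ => ((Real.log (ψ n) / n : ℝ) : EReal)) atTop) :
    dimH {x : ℝ | x ∈ Set.Ioc (0 : ℝ) 1 ∧
        Filter.limsup (fun n : ℕ => Real.log (lurothDigit n x) / ψ n) atTop = 1}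
      = 1 / (1 + A) := by
  change dimH (lurothEsup ψ) = 1 / (1 + A)
  have hψ0 : ∀ᶠ n in atTop, 0 < ψ n := hψ.eventually_gt_atTop 0
  have hA1 : 1 ≤ A := one_le_of_log_eq_liminf (hψ.eventually_ge_atTop 1) hA
  apply le_antisymm
  · obtain rfl | hA1 := hA1.eq_or_lt
    · refine dimH_lurothEsup_le_of_isLittleO_natCast
        (Asymptotics.isLittleO_of_tendsto' (hψ0.mono fun n hn h => (hn.ne' h).elim) ?_)
      simpa only [Pi.inv_def, inv_div] using hfast.inv_tendsto_atTop
    · refine le_one_div_one_add_of_forall_mem_Ioo hA1 fun b ⟨hb1, hbA⟩ => ?_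
      lift b to ℝ≥0 using hbA.ne_top
      exact dimH_lurothEsup_le_of_isLittleO_pow (by exact_mod_cast hb1)
        (isLittleO_pow_of_log_eq_liminf hψ0 hA hbA)
  · obtain rfl | hAtop := eq_or_ne A ⊤
    · simp
    refine one_div_one_add_le_of_forall_mem_Ioo hAtop.lt_top fun B ⟨hAB, hBtop⟩ => ?_
    lift B to ℝ≥0 using hBtop.ne
    exact one_div_one_add_le_dimH_lurothEsup hpos hψ (by exact_mod_cast hA1.trans_lt hAB)
      (not_isBigO_pow_of_log_eq_liminf hψ0 hA hAB)
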